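/- arXiv:1601.02218 — 2 statements merged into one kernel-verified Lean document; each statement's English description precedes it below -/
import Mathlib

section
/- Let H be a real Hilbert space, C ⊆ H nonempty closed convex, f : C × C → ℝ a bifunction satisfying (A1)–(A4), A : C → H an α-inverse strongly monotone mapping, and S : C → C an asymptotically κ-strictly pseudocontractive mapping with sequence {k_n} ⊆ [1,∞), k_n → 1. Suppose the parameters satisfy 0 < α_n < 1 with limsup α_n < 1, κ ≤ β_n ≤ b < 1, 0 < d ≤ r_n ≤ e < 2α, and that F = GEP(f,A) ∩ F(S) is nonempty and bounded with F ⊆ {v : ‖v‖ ≤ ω}. Let x_0 ∈ C, C_0 = C, and for n ≥ 0: y_n ∈ C satisfies f(y_n, y) + ⟨A x_n, y − y_n⟩ + (1/r_n)⟨y − y_n, y_n − x_n⟩ ≥ 0 for all y ∈ C; z_n = α_n x_n + (1−α_n)(β_n y_n + (1−β_n) S^n y_n); C_{n+1} = {v ∈ C_n : ‖z_n − v‖² ≤ ‖x_n − v‖² + ε_n} with ε_n = (k_n − 1)(‖x_n‖ + ω)²; x_{n+1} = P_{C_{n+1}} x_0. Then {x_n} converges strongly to P_F x_0. -/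
open scoped RealInnerProductSpace
open Filter Topology

/-- `p` is the metric projection of `x` onto `K`. -/
def IsProjOn {H : Type*} [NormedAddCommGroup H] (K : Set H) (x p : H) : Prop :=
  p ∈ K ∧ ∀ v ∈ K, ‖p - x‖ ≤ ‖v - x‖

/-!
By inverse strong monotonicity of `A` and pseudocontractivity of `Sⁿ`, every `v ∈ F` satisfies
`‖zₙ - v‖² + gₙ ‖yₙ - xₙ‖² ≤ ‖xₙ - v‖² + εₙ` with `gₙ` eventually bounded away from `0`. Hence `F`
lies in all the sets `Cₙ`, so the distances `‖xₙ - x₀‖` increase and are bounded by `‖v - x₀‖`,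
and the Pythagorean inequality for projections makes `x` a Cauchy sequence. Since
`xₙ₊₁ ∈ Cₙ₊₁`, the points `zₙ` have the same limit `p`; the inequality then forces `yₙ → p`, and
solving the convex combination for its last term gives `Sⁿ yₙ → p`. Equi-Lipschitz continuity of the
iterates makes `p` a fixed point of `S`, and Minty's lemma makes it a solution of the equilibrium
problem. Finally `‖xₙ - x₀‖ ≤ ‖v - x₀‖` passes to the limit.
-/

section Segments

variable {E : Type*} [AddCommGroup E] [Module ℝ E] {C : Set E} {p w x y z : E}

lemma eventually_segment_mem (hC : Convex ℝ C) (hx : x ∈ C) (hz : z ∈ C) :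
    ∀ᶠ t : ℝ in 𝓝[>] 0, t • z + (1 - t) • x ∈ C := by
  filter_upwards [Ioo_mem_nhdsGT one_pos] with t ht
  exact hC hz hx ht.1.le (sub_nonneg.2 ht.2.le) (by ring)

variable [TopologicalSpace E]

lemma tendsto_segment_nhdsWithin [ContinuousAdd E] [ContinuousSMul ℝ E] (hC : Convex ℝ C)
    (hx : x ∈ C) (hz : z ∈ C) :
    Tendsto (fun t : ℝ ↦ t • z + (1 - t) • x) (𝓝[>] 0) (𝓝[C] x) := by
  refine tendsto_nhdsWithin_iff.2 ⟨?_, eventually_segment_mem hC hx hz⟩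
  have hcont : Continuous fun t : ℝ ↦ t • z + (1 - t) • x := by fun_prop
  simpa using (hcont.tendsto 0).mono_left nhdsWithin_le_nhds

/-- Conditions (A1)–(A4) on a bifunction `f : C × C → ℝ`, encoded as a function on the whole space
whose values off `C × C` are irrelevant. -/
structure IsEquilibriumBifunction (C : Set E) (f : E → E → ℝ) : Prop where
  apply_self : ∀ x ∈ C, f x x = 0
  monotone : ∀ x ∈ C, ∀ y ∈ C, f x y + f y x ≤ 0
  limsup_le : ∀ x ∈ C, ∀ y ∈ C, ∀ z ∈ C,
    limsup (fun t : ℝ ↦ f (t • z + (1 - t) • x) y) (𝓝[>] 0) ≤ f x y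
  convexOn : ∀ x ∈ C, ConvexOn ℝ C (f x)
  lowerSemicontinuousOn : ∀ x ∈ C, LowerSemicontinuousOn (f x) C

namespace IsEquilibriumBifunction

variable {f : E → E → ℝ}

-- A real `limsup` carries information only for functions that are eventually bounded above; here
-- the bound comes from (A2) and the lower semicontinuity of `f y`.
lemma eventually_lt [ContinuousAdd E] [ContinuousSMul ℝ E] (hf : IsEquilibriumBifunction C f)
    (hx : x ∈ C) (hy : y ∈ C) (hz : z ∈ C) {c : ℝ} (hc : f x y < c) :
    ∀ᶠ t : ℝ in 𝓝[>] 0, f (t • z + (1 - t) • x) y < c := by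
  have hC : Convex ℝ C := (hf.convexOn x hx).1
  refine eventually_lt_of_limsup_lt ((hf.limsup_le x hx y hy z hz).trans_lt hc)
    ⟨-(f y x - 1), eventually_map.2 ?_⟩
  have hlsc := (tendsto_segment_nhdsWithin hC hx hz).eventually
    (hf.lowerSemicontinuousOn y hy x hx (f y x - 1) (sub_one_lt _))
  filter_upwards [hlsc, eventually_segment_mem hC hx hz] with t hlt hmem
  linarith [hf.monotone _ hmem y hy]

/-- **Minty's lemma** for the sum of a bifunction and a linear functional. -/
lemma nonneg_of_forall_le [ContinuousAdd E] [ContinuousSMul ℝ E]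
    (hf : IsEquilibriumBifunction C f) (φ : E →ₗ[ℝ] ℝ) (hp : p ∈ C)
    (hφ : ∀ w ∈ C, f w p ≤ φ (w - p)) (hw : w ∈ C) : 0 ≤ f p w + φ (w - p) := by
  have hC : Convex ℝ C := (hf.convexOn p hp).1
  have hlower : ∀ᶠ t : ℝ in 𝓝[>] 0, -((1 - t) * φ (w - p)) ≤ f (t • w + (1 - t) • p) w := by
    filter_upwards [eventually_segment_mem hC hp hw, Ioo_mem_nhdsGT one_pos] with t hmem ⟨ht0, ht1⟩
    set u := t • w + (1 - t) • p with hu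
    have hconv : f u u ≤ t * f u w + (1 - t) * f u p :=
      (hf.convexOn u hmem).2 hw hp ht0.le (sub_nonneg.2 ht1.le) (by ring)
    have hup : f u p ≤ t * φ (w - p) := by
      rw [← smul_eq_mul, ← map_smul, show t • (w - p) = u - p by rw [hu]; module]
      exact hφ u hmem
    rw [hf.apply_self u hmem] at hconv
    have : 0 ≤ t * (f u w + (1 - t) * φ (w - p)) := by
      linarith [mul_le_mul_of_nonneg_left hup (sub_nonneg.2 ht1.le)]
    linarith [nonneg_of_mul_nonneg_right this ht0]
  have hlim : Tendsto (fun t : ℝ ↦ -((1 - t) * φ (w - p))) (𝓝[>] 0) (𝓝 (-φ (w - p))) := by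
    have hcont : Continuous fun t : ℝ ↦ -((1 - t) * φ (w - p)) := by fun_prop
    simpa using (hcont.tendsto 0).mono_left nhdsWithin_le_nhds
  have hle : -φ (w - p) ≤ f p w := by
    refine le_of_forall_gt_imp_ge_of_dense fun c hc ↦ le_of_tendsto hlim ?_
    filter_upwards [hlower, hf.eventually_lt hp hw hw hc] with t hge hlt
    exact hge.trans hlt.le
  linarith

end IsEquilibriumBifunction

end Segments

section Limits

variable {ι : Type*} {l : Filter ι}

lemma tendsto_zero_of_mul_le {g s t : ι → ℝ} {δ : ℝ} (hδ : 0 < δ) (hg : ∀ᶠ i in l, δ ≤ g i)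
    (hs : ∀ i, 0 ≤ s i) (hst : ∀ i, g i * s i ≤ t i) (ht : Tendsto t l (𝓝 0)) :
    Tendsto s l (𝓝 0) := by
  refine squeeze_zero' (.of_forall hs) (hg.mono fun i hi ↦ ?_) (by simpa using ht.div_const δ)
  rw [le_div_iff₀' hδ]
  exact (mul_le_mul_of_nonneg_right hi (hs i)).trans (hst i)

lemma tendsto_of_tendsto_convexCombination {E : Type*} [NormedAddCommGroup E] [NormedSpace ℝ E]
    {x u : ι → E} {c : ι → ℝ} {m : ℝ} {p : E} (hm : m < 1) (hc : ∀ᶠ i in l, c i ≤ m)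
    (hx : Tendsto x l (𝓝 p)) (hxu : Tendsto (fun i ↦ c i • x i + (1 - c i) • u i) l (𝓝 p)) :
    Tendsto u l (𝓝 p) := by
  have hnorm (i : ι) : |1 - c i| * ‖u i - x i‖ = ‖c i • x i + (1 - c i) • u i - x i‖ := by
    rw [← Real.norm_eq_abs, ← norm_smul]
    congr 1
    module
  have hux : Tendsto (fun i ↦ u i - x i) l (𝓝 0) := by
    refine tendsto_zero_iff_norm_tendsto_zero.2 <| tendsto_zero_of_mul_le (sub_pos.2 hm)
      (hc.mono fun i hi ↦ (sub_le_sub_left hi 1).trans (le_abs_self _))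
      (fun i ↦ norm_nonneg _) (fun i ↦ (hnorm i).le) ?_
    simpa using (hxu.sub hx).norm
  simpa using hux.add hx

end Limits

section ShrinkingProjection

variable {H : Type*} [NormedAddCommGroup H] {C : Set H}

/-- The shrinking projection scheme: `D 0 = C`, the set `D (n + 1)` is cut out of `D n` by comparing
the distances to `z n` and to `x n` up to the error `ε n`, and `x n` is the projection of `x 0`
onto `D n`. -/
structure IsShrinkingProjection (C : Set H) (x z : ℕ → H) (ε : ℕ → ℝ) (D : ℕ → Set H) : Prop where
  mem_zero : x 0 ∈ C
  zero_eq : D 0 = C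
  succ_eq : ∀ n, D (n + 1) = {v ∈ D n | ‖z n - v‖ ^ 2 ≤ ‖x n - v‖ ^ 2 + ε n}
  isProjOn_succ : ∀ n, IsProjOn (D (n + 1)) (x 0) (x (n + 1))

variable {F : Set H} {x z : ℕ → H} {ε : ℕ → ℝ} {D : ℕ → Set H} {p : H}

namespace IsShrinkingProjection

lemma antitone (h : IsShrinkingProjection C x z ε D) : Antitone D :=
  antitone_nat_of_succ_le fun n ↦ (h.succ_eq n).trans_subset (Set.sep_subset _ _)

lemma isProjOn (h : IsShrinkingProjection C x z ε D) : ∀ n, IsProjOn (D n) (x 0) (x n)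
  | 0 => ⟨h.zero_eq ▸ h.mem_zero, fun v _ ↦ by simp⟩
  | n + 1 => h.isProjOn_succ n

lemma mem (h : IsShrinkingProjection C x z ε D) (n : ℕ) : x n ∈ C :=
  h.zero_eq ▸ h.antitone n.zero_le (h.isProjOn n).1

lemma subset (h : IsShrinkingProjection C x z ε D) (hFC : F ⊆ C)
    (hF : ∀ n, ∀ v ∈ F, ‖z n - v‖ ^ 2 ≤ ‖x n - v‖ ^ 2 + ε n) (n : ℕ) : F ⊆ D n := by
  induction n with
  | zero => exact h.zero_eq ▸ hFC
  | succ n ih => exact h.succ_eq n ▸ fun v hv ↦ ⟨ih hv, hF n v hv⟩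

lemma isProjOn_of_tendsto (h : IsShrinkingProjection C x z ε D) (hFD : ∀ n, F ⊆ D n)
    (hp : p ∈ F) (hx : Tendsto x atTop (𝓝 p)) : IsProjOn F (x 0) p :=
  ⟨hp, fun v hv ↦ le_of_tendsto (hx.sub_const (x 0)).norm <|
    .of_forall fun n ↦ (h.isProjOn n).2 v (hFD n hv)⟩

-- The point `x (n + 1)` lies in `D (n + 1)`, hence is almost as close to `z n` as to `x n`.
lemma tendsto_of_tendsto (h : IsShrinkingProjection C x z ε D) (hx : Tendsto x atTop (𝓝 p))
    (hε : Tendsto ε atTop (𝓝 0)) : Tendsto z atTop (𝓝 p) := by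
  have hx' : Tendsto (fun n ↦ x (n + 1)) atTop (𝓝 p) := (tendsto_add_atTop_iff_nat 1).2 hx
  have hbound (n : ℕ) : ‖z n - x (n + 1)‖ ^ 2 ≤ ‖x n - x (n + 1)‖ ^ 2 + ε n := by
    have hmem := (h.isProjOn_succ n).1
    rw [h.succ_eq] at hmem
    exact hmem.2
  have hzx : Tendsto (fun n ↦ z n - x (n + 1)) atTop (𝓝 0) :=
    squeeze_zero_norm (fun n ↦ Real.le_sqrt_of_sq_le (hbound n)) <| by
      simpa using (((hx.sub hx').norm.pow 2).add hε).sqrt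
  simpa using hzx.add hx'

end IsShrinkingProjection

variable [InnerProductSpace ℝ H]

lemma IsProjOn.norm_sub_sq_add_norm_sub_sq_le {K : Set H} {x p w : H} (hK : Convex ℝ K)
    (hp : IsProjOn K x p) (hw : w ∈ K) : ‖w - p‖ ^ 2 + ‖p - x‖ ^ 2 ≤ ‖w - x‖ ^ 2 := by
  have : Nonempty K := ⟨w, hw⟩
  have hmin : ‖x - p‖ = ⨅ v : K, ‖x - v‖ :=
    le_antisymm (le_ciInf fun v ↦ by simpa only [norm_sub_rev x] using hp.2 v v.2)
      (ciInf_le ⟨0, Set.forall_mem_range.2 fun _ ↦ norm_nonneg _⟩ (⟨p, hp.1⟩ : K))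
  have hinner : ⟪x - p, w - p⟫ ≤ 0 :=
    (norm_eq_iInf_iff_real_inner_le_zero hK hp.1).1 hmin w hw
  have hexpand := norm_sub_sq_real (w - p) (x - p)
  rw [sub_sub_sub_cancel_right, real_inner_comm, norm_sub_rev x p] at hexpand
  linarith

lemma cauchySeq_of_isProjOn_antitone {x₀ v : H} (hD : Antitone D)
    (hconv : ∀ n, Convex ℝ (D n)) (hx : ∀ n, IsProjOn (D n) x₀ (x n)) (hv : ∀ n, v ∈ D n) :
    CauchySeq x := by
  have hmono : Monotone fun n ↦ ‖x n - x₀‖ ^ 2 := fun n m hnm ↦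
    pow_le_pow_left₀ (norm_nonneg _) ((hx n).2 _ (hD hnm (hx m).1)) 2
  have hbdd : BddAbove (Set.range fun n ↦ ‖x n - x₀‖ ^ 2) :=
    ⟨‖v - x₀‖ ^ 2, Set.forall_mem_range.2 fun n ↦
      pow_le_pow_left₀ (norm_nonneg _) ((hx n).2 v (hv n)) 2⟩
  set L := ⨆ n, ‖x n - x₀‖ ^ 2
  have hlim : Tendsto (fun n ↦ √(L - ‖x n - x₀‖ ^ 2)) atTop (𝓝 0) := by
    simpa [L] using ((tendsto_atTop_ciSup hmono hbdd).const_sub L).sqrt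
  refine cauchySeq_of_le_tendsto_0' _ (fun n m hnm ↦ Real.le_sqrt_of_sq_le ?_) hlim
  have hpyth := (hx n).norm_sub_sq_add_norm_sub_sq_le (hconv n) (hD hnm (hx m).1)
  rw [dist_eq_norm, norm_sub_rev]
  linarith [le_ciSup hbdd m]

lemma convex_setOf_norm_sub_sq_le {K : Set H} (hK : Convex ℝ K) (x z : H) (ε : ℝ) :
    Convex ℝ {v ∈ K | ‖z - v‖ ^ 2 ≤ ‖x - v‖ ^ 2 + ε} := by
  have hhalf : {v | ‖z - v‖ ^ 2 ≤ ‖x - v‖ ^ 2 + ε} =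
      {v | innerSL ℝ (x - z) v ≤ (‖x‖ ^ 2 + ε - ‖z‖ ^ 2) / 2} := by
    ext v
    rw [Set.mem_ofPred_eq, Set.mem_ofPred_eq, innerSL_apply_apply, norm_sub_sq_real,
      norm_sub_sq_real, inner_sub_left]
    constructor <;> intro h <;> linarith
  have hconvex : Convex ℝ {v | ‖z - v‖ ^ 2 ≤ ‖x - v‖ ^ 2 + ε} := by
    rw [hhalf]
    exact convex_halfSpace_le (innerSL ℝ (x - z)).isLinear _
  exact hK.inter hconvex

lemma IsShrinkingProjection.convex (h : IsShrinkingProjection C x z ε D) (hC : Convex ℝ C) (n : ℕ) :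
    Convex ℝ (D n) := by
  induction n with
  | zero => exact h.zero_eq ▸ hC
  | succ n ih => exact h.succ_eq n ▸ convex_setOf_norm_sub_sq_le ih _ _ _

lemma IsShrinkingProjection.exists_tendsto (h : IsShrinkingProjection C x z ε D)
    (hCcomplete : IsComplete C) (hC : Convex ℝ C) (hF : F.Nonempty) (hFD : ∀ n, F ⊆ D n) :
    ∃ p ∈ C, Tendsto x atTop (𝓝 p) :=
  cauchySeq_tendsto_of_isComplete hCcomplete h.mem <|
    cauchySeq_of_isProjOn_antitone h.antitone (h.convex hC) h.isProjOn
      fun n ↦ hFD n hF.some_mem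

end ShrinkingProjection

section InverseStronglyMonotone

variable {H : Type*} [NormedAddCommGroup H] [InnerProductSpace ℝ H] {C : Set H}

/-- `A` is `α`-inverse strongly monotone (`α`-cocoercive) on `C`. -/
def IsInverseStronglyMonotoneOn (α : ℝ) (A : H → H) (C : Set H) : Prop :=
  ∀ x ∈ C, ∀ y ∈ C, α * ‖A x - A y‖ ^ 2 ≤ ⟪A x - A y, x - y⟫

variable {α : ℝ} {A : H → H}

lemma IsInverseStronglyMonotoneOn.continuousOn (hA : IsInverseStronglyMonotoneOn α A C)
    (hα : 0 < α) : ContinuousOn A C := by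
  have hlip : LipschitzOnWith (α⁻¹).toNNReal A C := .of_dist_le_mul fun x hx y hy ↦ by
    rw [Real.coe_toNNReal _ (inv_nonneg.2 hα.le), dist_eq_norm, dist_eq_norm,
      le_inv_mul_iff₀ hα]
    rcases (norm_nonneg (A x - A y)).eq_or_lt with hzero | hpos
    · rw [← hzero, mul_zero]
      exact norm_nonneg _
    · refine le_of_mul_le_mul_left ?_ hpos
      linarith [hA x hx y hy, real_inner_le_norm (A x - A y) (x - y)]
  exact hlip.continuousOn

lemma neg_inner_sub_inner_le (hα : 0 < α) {g u s : H}
    (hg : α * ‖g‖ ^ 2 ≤ ⟪g, u⟫) : -⟪g, u⟫ - ⟪g, s⟫ ≤ ‖s‖ ^ 2 / (4 * α) := by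
  have hsquare : 0 ≤ ‖(2 * α) • g + s‖ ^ 2 := sq_nonneg _
  rw [norm_add_sq_real, norm_smul, real_inner_smul_left, mul_pow, Real.norm_eq_abs,
    sq_abs] at hsquare
  rw [le_div_iff₀ (by positivity)]
  nlinarith

end InverseStronglyMonotone

section GeneralizedEquilibrium

variable {H : Type*} [NormedAddCommGroup H] [InnerProductSpace ℝ H] {C : Set H}

/-- The solution set `GEP(f, A)` of the generalized equilibrium problem on `C`. -/
def gepSolutions (C : Set H) (f : H → H → ℝ) (A : H → H) : Set H :=
  {v ∈ C | ∀ y ∈ C, 0 ≤ f v y + ⟪A v, y - v⟫}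

/-- `y` solves the generalized equilibrium problem regularized at `x` with parameter `r`: it is the
resolvent of `f` at `x - r • A x`. -/
def IsRegularizedGEPSolution (C : Set H) (f : H → H → ℝ) (A : H → H) (r : ℝ) (x y : H) : Prop :=
  y ∈ C ∧ ∀ w ∈ C, 0 ≤ f y w + ⟪A x, w - y⟫ + (1 / r) * ⟪w - y, y - x⟫

variable {f : H → H → ℝ} {A : H → H}

lemma IsRegularizedGEPSolution.norm_sub_sq_le {α r : ℝ} {x y v : H}
    (hy : IsRegularizedGEPSolution C f A r x y)
    (hf : ∀ u ∈ C, ∀ w ∈ C, f u w + f w u ≤ 0) (hA : IsInverseStronglyMonotoneOn α A C)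
    (hα : 0 < α) (hr : 0 < r) (hx : x ∈ C) (hv : v ∈ gepSolutions C f A) :
    ‖y - v‖ ^ 2 ≤ ‖x - v‖ ^ 2 - (1 - r / (2 * α)) * ‖y - x‖ ^ 2 := by
  have hvi : 0 ≤ ⟪A x - A v, v - y⟫ + (1 / r) * ⟪v - y, y - x⟫ := by
    rw [inner_sub_left, ← neg_sub y v, inner_neg_right (A v), neg_sub]
    linarith [hy.2 v hv.1, hv.2 y hy.1, hf v hv.1 y hy.1]
  have hvi' : 0 ≤ r * ⟪A x - A v, v - y⟫ + ⟪v - y, y - x⟫ := by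
    have := mul_nonneg hr.le hvi
    rwa [mul_add, ← mul_assoc, mul_one_div_cancel hr.ne', one_mul] at this
  have hsplit : ⟪A x - A v, v - y⟫ = -⟪A x - A v, x - v⟫ - ⟪A x - A v, y - x⟫ := by
    rw [← inner_neg_right, ← inner_sub_right]
    congr 1
    abel
  have hmono : r * ⟪A x - A v, v - y⟫ ≤ r * (‖y - x‖ ^ 2 / (4 * α)) := by
    rw [hsplit]
    exact mul_le_mul_of_nonneg_left
      (neg_inner_sub_inner_le hα (hA x hx v hv.1)) hr.le
  have hscale : r / (2 * α) * ‖y - x‖ ^ 2 = 2 * (r * (‖y - x‖ ^ 2 / (4 * α))) := by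
    field_simp
    ring
  have hexpand : ‖x - v‖ ^ 2 = ‖y - v‖ ^ 2 + 2 * ⟪v - y, y - x⟫ + ‖y - x‖ ^ 2 := by
    rw [norm_sub_rev x, norm_sub_rev y v, ← norm_add_sq_real, sub_add_sub_cancel]
  linarith

lemma apply_le_inner_of_tendsto {ι : Type*} {l : Filter ι} [l.NeBot] {x y : ι → H} {r : ι → ℝ}
    {d : ℝ} {p w : H} (hf : IsEquilibriumBifunction C f)
    (hy : ∀ i, IsRegularizedGEPSolution C f A (r i) (x i) (y i)) (hd : 0 < d)
    (hr : ∀ i, d ≤ r i) (hp : p ∈ C) (hxp : Tendsto x l (𝓝 p)) (hyp : Tendsto y l (𝓝 p))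
    (hAx : Tendsto (fun i ↦ A (x i)) l (𝓝 (A p))) (hw : w ∈ C) :
    f w p ≤ ⟪A p, w - p⟫ := by
  have hwy : Tendsto (fun i ↦ w - y i) l (𝓝 (w - p)) := hyp.const_sub w
  have hreg : Tendsto (fun i ↦ (1 / r i) * ⟪w - y i, y i - x i⟫) l (𝓝 0) := by
    refine tendsto_zero_iff_norm_tendsto_zero.2 <| tendsto_zero_of_mul_le hd (.of_forall hr)
      (t := fun i ↦ ‖⟪w - y i, y i - x i⟫‖) (fun i ↦ norm_nonneg _) (fun i ↦ ?_) ?_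
    · have hri : 0 < r i := hd.trans_le (hr i)
      rw [norm_mul, Real.norm_of_nonneg (one_div_nonneg.2 hri.le), ← mul_assoc,
        mul_one_div_cancel hri.ne', one_mul]
    · simpa using (hwy.inner (𝕜 := ℝ) (hyp.sub hxp)).norm
  have hlim : Tendsto (fun i ↦ ⟪A (x i), w - y i⟫ + (1 / r i) * ⟪w - y i, y i - x i⟫) l
      (𝓝 ⟪A p, w - p⟫) := by
    simpa using (hAx.inner (𝕜 := ℝ) hwy).add hreg
  have hyC : Tendsto y l (𝓝[C] p) :=
    tendsto_nhdsWithin_iff.2 ⟨hyp, .of_forall fun i ↦ (hy i).1⟩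
  refine le_of_forall_lt_imp_le_of_dense fun c hc ↦ ge_of_tendsto hlim ?_
  filter_upwards [hyC.eventually (hf.lowerSemicontinuousOn w hw p hp c hc)] with i hi
  linarith [(hy i).2 w hw, hf.monotone w hw _ (hy i).1]

lemma mem_gepSolutions_of_tendsto {ι : Type*} {l : Filter ι} [l.NeBot] {x y : ι → H} {r : ι → ℝ}
    {d : ℝ} {p : H} (hf : IsEquilibriumBifunction C f)
    (hy : ∀ i, IsRegularizedGEPSolution C f A (r i) (x i) (y i)) (hd : 0 < d)
    (hr : ∀ i, d ≤ r i) (hp : p ∈ C) (hxp : Tendsto x l (𝓝 p)) (hyp : Tendsto y l (𝓝 p))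
    (hAx : Tendsto (fun i ↦ A (x i)) l (𝓝 (A p))) : p ∈ gepSolutions C f A :=
  ⟨hp, fun _ hw ↦ hf.nonneg_of_forall_le (innerₗ H (A p)) hp
    (fun _ hw ↦ apply_le_inner_of_tendsto hf hy hd hr hp hxp hyp hAx hw) hw⟩

end GeneralizedEquilibrium

section StrictPseudocontractive

variable {H : Type*} [NormedAddCommGroup H] {C : Set H}

/-- `T` is a `κ`-strict pseudocontraction on `C` up to the factor `L`; the classical notion is
`L = 1`. The factor lets the notion apply to each iterate of an asymptotic pseudocontraction. -/
def IsStrictPseudocontractiveOn (κ L : ℝ) (T : H → H) (C : Set H) : Prop :=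
  ∀ x ∈ C, ∀ y ∈ C, ‖T x - T y‖ ^ 2 ≤ L * ‖x - y‖ ^ 2 + κ * ‖(x - T x) - (y - T y)‖ ^ 2

/-- `S` is asymptotically `κ`-strictly pseudocontractive on `C` with sequence `k`: its iterates are
strict pseudocontractions up to factors tending to `1`. -/
structure IsAsymptoticallyStrictPseudocontractiveOn (κ : ℝ) (k : ℕ → ℝ) (S : H → H)
    (C : Set H) : Prop where
  one_le : ∀ n, 1 ≤ k n
  tendsto : Tendsto k atTop (𝓝 1)
  iterate_of_one_le : ∀ n, 1 ≤ n → IsStrictPseudocontractiveOn κ (k n) S^[n] C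

variable {κ L : ℝ} {T : H → H}

lemma le_of_sq_le_add_mul_sq {s t : ℝ} (hs : 0 ≤ s) (ht : 0 ≤ t) (hL : 0 ≤ L) (hκ0 : 0 ≤ κ)
    (hκ1 : κ < 1) (h : s ^ 2 ≤ L * t ^ 2 + κ * (t + s) ^ 2) :
    s ≤ (√L + √κ) / (1 - √κ) * t := by
  have hsqrt : √κ < 1 := (Real.sqrt_lt_sqrt hκ0 hκ1).trans_eq Real.sqrt_one
  have hcross : 0 ≤ 2 * (√L * t) * (√κ * (t + s)) := by positivity
  have hroot : s ≤ √L * t + √κ * (t + s) := by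
    refine le_of_sq_le_sq ?_ (by positivity)
    calc s ^ 2 ≤ √L ^ 2 * t ^ 2 + √κ ^ 2 * (t + s) ^ 2 := by
          rwa [Real.sq_sqrt hL, Real.sq_sqrt hκ0]
      _ ≤ (√L * t + √κ * (t + s)) ^ 2 := by linarith
  rw [div_mul_eq_mul_div, le_div_iff₀ (sub_pos.2 hsqrt)]
  linarith

namespace IsStrictPseudocontractiveOn

lemma norm_sub_le (hT : IsStrictPseudocontractiveOn κ L T C) (hL : 0 ≤ L) (hκ0 : 0 ≤ κ)
    (hκ1 : κ < 1) {x y : H} (hx : x ∈ C) (hy : y ∈ C) :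
    ‖T x - T y‖ ≤ (√L + √κ) / (1 - √κ) * ‖x - y‖ := by
  refine le_of_sq_le_add_mul_sq (norm_nonneg _) (norm_nonneg _) hL hκ0 hκ1 <|
    (hT x hx y hy).trans ?_
  rw [sub_sub_sub_comm x]
  gcongr
  exact _root_.norm_sub_le _ _

lemma continuousOn (hT : IsStrictPseudocontractiveOn κ L T C) (hL : 0 ≤ L) (hκ0 : 0 ≤ κ)
    (hκ1 : κ < 1) : ContinuousOn T C := by
  have hlip : LipschitzOnWith ((√L + √κ) / (1 - √κ)).toNNReal T C :=
    .of_dist_le_mul fun x hx y hy ↦ by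
      rw [dist_eq_norm, dist_eq_norm]
      exact (hT.norm_sub_le hL hκ0 hκ1 hx hy).trans
        (mul_le_mul_of_nonneg_right (Real.le_coe_toNNReal _) (norm_nonneg _))
  exact hlip.continuousOn

end IsStrictPseudocontractiveOn

namespace IsAsymptoticallyStrictPseudocontractiveOn

variable {k : ℕ → ℝ} {S : H → H} {y : ℕ → H} {p : H}

lemma iterate (hS : IsAsymptoticallyStrictPseudocontractiveOn κ k S C) (n : ℕ) :
    IsStrictPseudocontractiveOn κ (k n) S^[n] C := by
  rcases n.eq_zero_or_pos with rfl | hn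
  · intro x _ y _
    simpa using le_mul_of_one_le_left (sq_nonneg ‖x - y‖) (hS.one_le 0)
  · exact hS.iterate_of_one_le n hn

lemma isFixedPt_of_tendsto (hS : IsAsymptoticallyStrictPseudocontractiveOn κ k S C)
    (hmaps : Set.MapsTo S C C) (hκ0 : 0 ≤ κ) (hκ1 : κ < 1) (hp : p ∈ C) (hy : ∀ n, y n ∈ C)
    (hyp : Tendsto y atTop (𝓝 p)) (hSy : Tendsto (fun n ↦ S^[n] (y n)) atTop (𝓝 p)) :
    Function.IsFixedPt S p := by
  have hk (n : ℕ) : 0 ≤ k n := zero_le_one.trans (hS.one_le n)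
  have hdiff : Tendsto (fun n ↦ S^[n] p - S^[n] (y n)) atTop (𝓝 0) := by
    refine squeeze_zero_norm
      (fun n ↦ (hS.iterate n).norm_sub_le (hk n) hκ0 hκ1 hp (hy n)) ?_
    simpa using ((hS.tendsto.sqrt.add_const √κ).div_const (1 - √κ)).mul (hyp.const_sub p).norm
  have hSp : Tendsto (fun n ↦ S^[n] p) atTop (𝓝 p) := by simpa using hdiff.add hSy
  have hcont : ContinuousOn S C := (hS.iterate 1).continuousOn (hk 1) hκ0 hκ1
  have hSSp : Tendsto (fun n ↦ S (S^[n] p)) atTop (𝓝 (S p)) :=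
    (hcont p hp).tendsto.comp <|
      tendsto_nhdsWithin_iff.2 ⟨hSp, .of_forall fun n ↦ hmaps.iterate n hp⟩
  refine tendsto_nhds_unique hSSp ?_
  simpa only [Function.iterate_succ_apply'] using (tendsto_add_atTop_iff_nat 1).2 hSp

end IsAsymptoticallyStrictPseudocontractiveOn

variable [InnerProductSpace ℝ H]

lemma norm_convexCombination_sq (u v : H) (t : ℝ) :
    ‖t • u + (1 - t) • v‖ ^ 2 =
      t * ‖u‖ ^ 2 + (1 - t) * ‖v‖ ^ 2 - t * (1 - t) * ‖u - v‖ ^ 2 := by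
  simp only [norm_add_sq_real, norm_sub_sq_real, norm_smul, mul_pow, Real.norm_eq_abs, sq_abs,
    real_inner_smul_left, real_inner_smul_right]
  ring

lemma IsStrictPseudocontractiveOn.norm_mann_sub_sq_le
    (hT : IsStrictPseudocontractiveOn κ L T C) (hL : 1 ≤ L) {β : ℝ} {y v : H}
    (hκβ : κ ≤ β) (hβ0 : 0 ≤ β) (hβ1 : β ≤ 1) (hy : y ∈ C) (hv : v ∈ C) (hTv : T v = v) :
    ‖β • y + (1 - β) • T y - v‖ ^ 2 ≤ L * ‖y - v‖ ^ 2 := by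
  have hTy : ‖T y - v‖ ^ 2 ≤ L * ‖y - v‖ ^ 2 + κ * ‖y - T y‖ ^ 2 := by
    simpa [hTv] using hT y hy v hv
  have hweight : 0 ≤ (1 - β) * (β - κ) * ‖y - T y‖ ^ 2 :=
    mul_nonneg (mul_nonneg (sub_nonneg.2 hβ1) (sub_nonneg.2 hκβ)) (sq_nonneg _)
  have hfactor : β * ‖y - v‖ ^ 2 ≤ β * (L * ‖y - v‖ ^ 2) :=
    mul_le_mul_of_nonneg_left (le_mul_of_one_le_left (sq_nonneg _) hL) hβ0
  calc ‖β • y + (1 - β) • T y - v‖ ^ 2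
      = ‖β • (y - v) + (1 - β) • (T y - v)‖ ^ 2 := by congr 2; module
    _ = β * ‖y - v‖ ^ 2 + (1 - β) * ‖T y - v‖ ^ 2 - β * (1 - β) * ‖y - T y‖ ^ 2 := by
        rw [norm_convexCombination_sq, sub_sub_sub_cancel_right]
    _ ≤ L * ‖y - v‖ ^ 2 := by
        linarith [mul_le_mul_of_nonneg_left hTy (sub_nonneg.2 hβ1)]

end StrictPseudocontractive

section HybridAlgorithm

variable {H : Type*} [NormedAddCommGroup H] {C : Set H}

lemma mul_norm_sub_sq_le {L ω : ℝ} {x v : H} (hL : 1 ≤ L) (hv : ‖v‖ ≤ ω) :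
    L * ‖x - v‖ ^ 2 ≤ ‖x - v‖ ^ 2 + (L - 1) * (‖x‖ + ω) ^ 2 := by
  have hnorm : ‖x - v‖ ^ 2 ≤ (‖x‖ + ω) ^ 2 := by
    gcongr
    exact (norm_sub_le x v).trans (by gcongr)
  linarith [mul_le_mul_of_nonneg_left hnorm (sub_nonneg.2 hL)]

lemma tendsto_of_norm_sub_sq_add_mul_le {ι : Type*} {l : Filter ι} {x y z : ι → H}
    {g ε : ι → ℝ} {δ : ℝ} {p v : H} (hδ : 0 < δ) (hg : ∀ᶠ i in l, δ ≤ g i)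
    (h : ∀ i, ‖z i - v‖ ^ 2 + g i * ‖y i - x i‖ ^ 2 ≤ ‖x i - v‖ ^ 2 + ε i)
    (hx : Tendsto x l (𝓝 p)) (hz : Tendsto z l (𝓝 p)) (hε : Tendsto ε l (𝓝 0)) :
    Tendsto y l (𝓝 p) := by
  have hsq : Tendsto (fun i ↦ ‖y i - x i‖ ^ 2) l (𝓝 0) := by
    refine tendsto_zero_of_mul_le (t := fun i ↦ ‖x i - v‖ ^ 2 + ε i - ‖z i - v‖ ^ 2) hδ hg
      (fun i ↦ sq_nonneg _) (fun i ↦ le_sub_iff_add_le'.2 (h i)) ?_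
    simpa using (((hx.sub_const v).norm.pow 2).add hε).sub ((hz.sub_const v).norm.pow 2)
  have hyx : Tendsto (fun i ↦ y i - x i) l (𝓝 0) :=
    tendsto_zero_iff_norm_tendsto_zero.2 <| by simpa using hsq.sqrt
  simpa using hyx.add hx

variable [InnerProductSpace ℝ H]

lemma norm_hybridStep_sub_sq_add_le {f : H → H → ℝ} {A T : H → H} {α κ L a β r e : ℝ} {x y v : H}
    (hf : ∀ u ∈ C, ∀ w ∈ C, f u w + f w u ≤ 0) (hA : IsInverseStronglyMonotoneOn α A C)
    (hT : IsStrictPseudocontractiveOn κ L T C) (hL : 1 ≤ L) (ha : a ∈ Set.Icc 0 1)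
    (hκβ : κ ≤ β) (hβ0 : 0 ≤ β) (hβ1 : β ≤ 1) (hr : 0 < r) (hre : r ≤ e) (he : e < 2 * α)
    (hx : x ∈ C) (hy : IsRegularizedGEPSolution C f A r x y) (hv : v ∈ gepSolutions C f A)
    (hTv : T v = v) :
    ‖a • x + (1 - a) • (β • y + (1 - β) • T y) - v‖ ^ 2
        + (1 - a) * (1 - e / (2 * α)) * ‖y - x‖ ^ 2 ≤ L * ‖x - v‖ ^ 2 := by
  set u := β • y + (1 - β) • T y
  set c := 1 - e / (2 * α)
  obtain ⟨ha0, ha1⟩ := ha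
  have hα : 0 < α := by linarith
  have hc : 0 ≤ c := sub_nonneg.2 ((div_le_one (by positivity)).2 he.le)
  have hres : ‖y - v‖ ^ 2 ≤ ‖x - v‖ ^ 2 - c * ‖y - x‖ ^ 2 :=
    (hy.norm_sub_sq_le hf hA hα hr hx hv).trans (by simp only [c]; gcongr)
  have hgap : c * ‖y - x‖ ^ 2 ≤ L * (c * ‖y - x‖ ^ 2) :=
    le_mul_of_one_le_left (mul_nonneg hc (sq_nonneg _)) hL
  have hu : ‖u - v‖ ^ 2 ≤ L * ‖x - v‖ ^ 2 - c * ‖y - x‖ ^ 2 := by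
    calc ‖u - v‖ ^ 2 ≤ L * ‖y - v‖ ^ 2 := hT.norm_mann_sub_sq_le hL hκβ hβ0 hβ1 hy.1 hv.1 hTv
      _ ≤ L * (‖x - v‖ ^ 2 - c * ‖y - x‖ ^ 2) :=
          mul_le_mul_of_nonneg_left hres (zero_le_one.trans hL)
      _ ≤ L * ‖x - v‖ ^ 2 - c * ‖y - x‖ ^ 2 := by linarith
  have hconvex : ‖a • x + (1 - a) • u - v‖ ^ 2 ≤ a * ‖x - v‖ ^ 2 + (1 - a) * ‖u - v‖ ^ 2 := by
    rw [show a • x + (1 - a) • u - v = a • (x - v) + (1 - a) • (u - v) by module,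
      norm_convexCombination_sq]
    exact sub_le_self _ (mul_nonneg (mul_nonneg ha0 (sub_nonneg.2 ha1)) (sq_nonneg _))
  have hxL : a * ‖x - v‖ ^ 2 ≤ a * (L * ‖x - v‖ ^ 2) :=
    mul_le_mul_of_nonneg_left (le_mul_of_one_le_left (sq_nonneg _) hL) ha0
  linarith [mul_le_mul_of_nonneg_left hu (sub_nonneg.2 ha1)]

lemma mem_gepSolutions_inter_of_tendsto {f : H → H → ℝ} {A S : H → H} {α κ : ℝ} {k : ℕ → ℝ}
    (hf : IsEquilibriumBifunction C f) (hA : IsInverseStronglyMonotoneOn α A C) (hα : 0 < α)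
    (hSC : Set.MapsTo S C C) (hκ0 : 0 ≤ κ) (hκ1 : κ < 1)
    (hS : IsAsymptoticallyStrictPseudocontractiveOn κ k S C)
    {a β r : ℕ → ℝ} {m b d : ℝ} (hm : m < 1) (ha : ∀ᶠ n in atTop, a n ≤ m)
    (hb : b < 1) (hβ : ∀ᶠ n in atTop, β n ≤ b) (hd : 0 < d) (hr : ∀ n, d ≤ r n)
    {x y : ℕ → H} {p : H} (hxC : ∀ n, x n ∈ C) (hp : p ∈ C)
    (hy : ∀ n, IsRegularizedGEPSolution C f A (r n) (x n) (y n))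
    (hxp : Tendsto x atTop (𝓝 p)) (hyp : Tendsto y atTop (𝓝 p))
    (hzp : Tendsto (fun n ↦ a n • x n + (1 - a n) • (β n • y n + (1 - β n) • S^[n] (y n)))
      atTop (𝓝 p)) :
    p ∈ gepSolutions C f A ∩ {v | S v = v} := by
  have hSyp : Tendsto (fun n ↦ S^[n] (y n)) atTop (𝓝 p) :=
    tendsto_of_tendsto_convexCombination hb hβ hyp <|
      tendsto_of_tendsto_convexCombination hm ha hxp hzp
  have hAx : Tendsto (fun n ↦ A (x n)) atTop (𝓝 (A p)) :=
    (hA.continuousOn hα p hp).tendsto.comp <| tendsto_nhdsWithin_iff.2 ⟨hxp, .of_forall hxC⟩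
  exact ⟨mem_gepSolutions_of_tendsto hf hy hd hr hp hxp hyp hAx,
    hS.isFixedPt_of_tendsto hSC hκ0 hκ1 hp (fun n ↦ (hy n).1) hyp hSyp⟩

theorem corollary33_strong_convergence_general {f : H → H → ℝ} {A S : H → H} {α κ : ℝ}
    {k : ℕ → ℝ} (hC : IsComplete C) (hf : IsEquilibriumBifunction C f)
    (hA : IsInverseStronglyMonotoneOn α A C) (hSC : Set.MapsTo S C C) (hκ : 0 ≤ κ)
    (hS : IsAsymptoticallyStrictPseudocontractiveOn κ k S C)
    {F : Set H} (hF : F = gepSolutions C f A ∩ {v | S v = v}) (hFne : F.Nonempty)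
    {ω : ℝ} (hFω : ∀ v ∈ F, ‖v‖ ≤ ω)
    {a : ℕ → ℝ} (ha : ∀ n, a n ∈ Set.Icc 0 1) (halim : limsup a atTop < 1)
    {β : ℕ → ℝ} {b : ℝ} (hb : b < 1) (hβ : ∀ n, κ ≤ β n ∧ β n ≤ b)
    {r : ℕ → ℝ} {d e : ℝ} (hd : 0 < d) (he : e < 2 * α) (hr : ∀ n, d ≤ r n ∧ r n ≤ e)
    {x y z : ℕ → H} {D : ℕ → Set H}
    (hy : ∀ n, IsRegularizedGEPSolution C f A (r n) (x n) (y n))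
    (hz : ∀ n, z n = a n • x n + (1 - a n) • (β n • y n + (1 - β n) • S^[n] (y n)))
    (hx : IsShrinkingProjection C x z (fun n ↦ (k n - 1) * (‖x n‖ + ω) ^ 2) D) :
    ∃ p, IsProjOn F (x 0) p ∧ Tendsto x atTop (𝓝 p) := by
  have hα : 0 < α := by linarith [hr 0]
  have hκ1 : κ < 1 := ((hβ 0).1.trans (hβ 0).2).trans_lt hb
  obtain ⟨m, ham, hm⟩ := exists_between halim
  have ha_le : ∀ᶠ n in atTop, a n ≤ m :=
    (eventually_lt_of_limsup_lt ham (isBoundedUnder_of ⟨1, fun n ↦ (ha n).2⟩)).mono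
      fun n hn ↦ hn.le
  have hstep (n : ℕ) (v : H) (hv : v ∈ F) : ‖z n - v‖ ^ 2
      + (1 - a n) * (1 - e / (2 * α)) * ‖y n - x n‖ ^ 2 ≤
        ‖x n - v‖ ^ 2 + (k n - 1) * (‖x n‖ + ω) ^ 2 := by
    have hvF : v ∈ gepSolutions C f A ∩ {v | S v = v} := hF ▸ hv
    rw [hz n]
    exact (norm_hybridStep_sub_sq_add_le hf.monotone hA (hS.iterate n) (hS.one_le n) (ha n)
      (hβ n).1 (hκ.trans (hβ n).1) ((hβ n).2.trans hb.le) (hd.trans_le (hr n).1)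
      (hr n).2 he (hx.mem n) (hy n) hvF.1 (Function.iterate_fixed hvF.2 n)).trans
      (mul_norm_sub_sq_le (hS.one_le n) (hFω v hv))
  have hgap : 0 < 1 - e / (2 * α) := sub_pos.2 ((div_lt_one (by positivity)).2 he)
  have hFD : ∀ n, F ⊆ D n := hx.subset (hF ▸ fun v hv ↦ hv.1.1) fun n v hv ↦
    (le_add_of_nonneg_right (mul_nonneg (mul_nonneg (sub_nonneg.2 (ha n).2) hgap.le)
      (sq_nonneg _))).trans (hstep n v hv)
  have hconv : Convex ℝ C := (hf.convexOn _ hx.mem_zero).1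
  obtain ⟨p, hpC, hxp⟩ := hx.exists_tendsto hC hconv hFne hFD
  have hε : Tendsto (fun n ↦ (k n - 1) * (‖x n‖ + ω) ^ 2) atTop (𝓝 0) := by
    simpa using (hS.tendsto.sub_const 1).mul ((hxp.norm.add_const ω).pow 2)
  have hzp : Tendsto z atTop (𝓝 p) := hx.tendsto_of_tendsto hxp hε
  have hyp : Tendsto y atTop (𝓝 p) :=
    tendsto_of_norm_sub_sq_add_mul_le (mul_pos (sub_pos.2 hm) hgap)
      (ha_le.mono fun n hn ↦ mul_le_mul_of_nonneg_right (sub_le_sub_left hn 1) hgap.le)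
      (fun n ↦ hstep n _ hFne.some_mem) hxp hzp hε
  have hpF : p ∈ F := hF ▸
    mem_gepSolutions_inter_of_tendsto hf hA hα hSC hκ hκ1 hS hm ha_le hb
      (.of_forall fun n ↦ (hβ n).2) hd (fun n ↦ (hr n).1) hx.mem hpC hy hxp hyp (hzp.congr hz)
  exact ⟨p, hx.isProjOn_of_tendsto hFD hpF hxp, hxp⟩

end HybridAlgorithm

/-- **Corollary 3.3.** Hybrid algorithm for a single generalized
equilibrium problem and a single asymptotically κ-strictly pseudocontractive mapping:
`{xₙ}` converges strongly to `P_F x₀`. -/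
theorem corollary33_strong_convergence
    {H : Type*} [NormedAddCommGroup H] [InnerProductSpace ℝ H] [CompleteSpace H]
    (C : Set H) (hCne : C.Nonempty) (hCcl : IsClosed C) (hCcv : Convex ℝ C)
    -- the bifunction f satisfies (A1)-(A4)
    (f : H → H → ℝ)
    (hfA1 : ∀ x ∈ C, f x x = 0)
    (hfA2 : ∀ x ∈ C, ∀ y ∈ C, f x y + f y x ≤ 0)
    (hfA3 : ∀ x ∈ C, ∀ y ∈ C, ∀ z ∈ C,
      Filter.limsup (fun t : ℝ => f (t • z + (1 - t) • x) y) (nhdsWithin 0 (Set.Ioi 0))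
        ≤ f x y)
    (hfA4conv : ∀ x ∈ C, ConvexOn ℝ C (f x))
    (hfA4lsc : ∀ x ∈ C, LowerSemicontinuousOn (f x) C)
    -- the operator A is α-inverse strongly monotone on C
    (A : H → H) (α : ℝ) (hα : 0 < α)
    (hism : ∀ x ∈ C, ∀ y ∈ C, α * ‖A x - A y‖ ^ 2 ≤ ⟪A x - A y, x - y⟫)
    -- the mapping S : C → C is asymptotically κ-strictly pseudocontractive with
    -- sequence {kₙ} ⊆ [1,∞), kₙ → 1
    (S : H → H) (hS : Set.MapsTo S C C)
    (κ : ℝ) (hκ0 : 0 ≤ κ) (hκ1 : κ < 1)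
    (k : ℕ → ℝ) (hk1 : ∀ n, 1 ≤ k n)
    (hklim : Filter.Tendsto k Filter.atTop (nhds 1))
    (hasym : ∀ n, 1 ≤ n → ∀ x ∈ C, ∀ y ∈ C,
      ‖S^[n] x - S^[n] y‖ ^ 2
        ≤ k n * ‖x - y‖ ^ 2 + κ * ‖(x - S^[n] x) - (y - S^[n] y)‖ ^ 2)
    -- the solution set F is nonempty and bounded by ω
    (F : Set H)
    (hF : F = {v ∈ C | ∀ y ∈ C, 0 ≤ f v y + ⟪A v, y - v⟫} ∩ {v | S v = v})
    (hFne : F.Nonempty) (ω : ℝ) (hω : 0 < ω) (hFb : ∀ v ∈ F, ‖v‖ ≤ ω)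
    -- control parameters
    (a : ℕ → ℝ) (ha0 : ∀ n, 0 < a n) (ha1 : ∀ n, a n < 1)
    (halimsup : Filter.limsup a Filter.atTop < 1)
    (β : ℕ → ℝ) (b : ℝ) (hbκ : κ < b) (hb1 : b < 1) (hβ : ∀ n, κ ≤ β n ∧ β n ≤ b)
    (r : ℕ → ℝ) (d e : ℝ) (hd : 0 < d) (he : e < 2 * α) (hr : ∀ n, d ≤ r n ∧ r n ≤ e)
    -- the iterates of Algorithm 1
    (x : ℕ → H) (y : ℕ → H) (z : ℕ → H) (Cset : ℕ → Set H)
    (hx0 : x 0 ∈ C) (hC0 : Cset 0 = C)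
    -- (i) yₙ solves the regularized generalized equilibrium problem
    (hy : ∀ n, y n ∈ C ∧ ∀ w ∈ C,
      0 ≤ f (y n) w + ⟪A (x n), w - y n⟫ + (1 / r n) * ⟪w - y n, y n - x n⟫)
    -- (ii) zₙ = αₙ xₙ + (1-αₙ)(βₙ yₙ + (1-βₙ) Sⁿ yₙ)
    (hz : ∀ n, z n = a n • x n + (1 - a n) • (β n • y n + (1 - β n) • S^[n] (y n)))
    -- (iii) Cₙ₊₁ = {v ∈ Cₙ : ‖zₙ - v‖² ≤ ‖xₙ - v‖² + εₙ}, εₙ = (kₙ - 1)(‖xₙ‖ + ω)²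
    (hCset : ∀ n, Cset (n + 1) =
      {v ∈ Cset n | ‖z n - v‖ ^ 2 ≤ ‖x n - v‖ ^ 2 + (k n - 1) * (‖x n‖ + ω) ^ 2})
    -- (vi) xₙ₊₁ = P_{Cₙ₊₁} x₀
    (hxproj : ∀ n, IsProjOn (Cset (n + 1)) (x 0) (x (n + 1))) :
    ∃ p, IsProjOn F (x 0) p ∧ Filter.Tendsto x Filter.atTop (nhds p) :=
  corollary33_strong_convergence_general hCcl.isComplete
    ⟨hfA1, hfA2, hfA3, hfA4conv, hfA4lsc⟩ hism hS hκ0 ⟨hk1, hklim, hasym⟩ hF hFne hFb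
    (fun n ↦ ⟨(ha0 n).le, (ha1 n).le⟩) halimsup hb1 hβ hd he hr hy hz ⟨hx0, hC0, hCset, hxproj⟩
end

section
/- Let H be a real Hilbert space, C ⊆ H nonempty closed convex. Suppose each f_i (i = 1,…,N) satisfies (A1)–(A4), each S_j : C → C (j = 1,…,M) is κ-strictly pseudocontractive, the parameters satisfy 0 < α_n < 1 with limsup α_n < 1, κ ≤ β_n ≤ b < 1, and 0 < d ≤ r_n ≤ e, and F = (∩_{i=1}^N EP(f_i,C)) ∩ (∩_{j=1}^M F(S_j)) is nonempty. Let x_0 ∈ C, C_0 = C, and for n ≥ 0: y_n^i ∈ C satisfies f_i(y_n^i, y) + (1/r_n)⟨y − y_n^i, y_n^i − x_n⟩ ≥ 0 for all y ∈ C; i_n maximizes ‖y_n^i − x_n‖ and ȳ_n = y_n^{i_n}; z_n^j = α_n x_n + (1−α_n)(β_n ȳ_n + (1−β_n) S_j ȳ_n); j_n maximizes ‖z_n^j − x_n‖ and z̄_n = z_n^{j_n}; C_{n+1} = {v ∈ C_n : ‖z̄_n − v‖ ≤ ‖x_n − v‖}; x_{n+1} = P_{C_{n+1}} x_0. Then {x_n}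 converges strongly to P_F x_0. -/
open scoped RealInnerProductSpace
open Filter Topology

/-!
The sets `D n` of the algorithm are nested and convex and contain the solution set `F`, so the
distances `‖x n - x 0‖` increase and are bounded; the obtuse-angle inequality for projections turns
this into the Cauchy property. Let `p` be the limit. Since `x (n + 1) ∈ D (n + 1)`, also
`zbar n → p`. For `v ∈ F` the estimate `‖zbar n - v‖² ≤ ‖x n - v‖² - (1 - a n) ‖x n - ybar n‖²` then
forces `x n - ybar n → 0`, and because `ybar` and `zbar` are the worst of the parallel candidates,
all resolvents `y n i` converge to `p` and all residuals `ybar n - S j (ybar n)` vanish. Hence `p`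
solves every equilibrium problem (by Minty's lemma) and is fixed by every `S j`.
-/

open Set

section Limits

variable {α : Type*} {l : Filter α}

theorem le_of_lowerSemicontinuousWithinAt_of_tendsto {X γ : Type*} [TopologicalSpace X]
    [LinearOrder γ] [DenselyOrdered γ] [TopologicalSpace γ] [OrderTopology γ] [l.NeBot]
    {g : X → γ} {s : Set X} {p : X} {u : α → X} {c : α → γ} {m : γ}
    (hg : LowerSemicontinuousWithinAt g s p) (hu : Tendsto u l (𝓝[s] p))
    (hle : ∀ᶠ n in l, g (u n) ≤ c n) (hc : Tendsto c l (𝓝 m)) : g p ≤ m := by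
  refine le_of_forall_lt_imp_le_of_dense fun q hq => ge_of_tendsto hc ?_
  filter_upwards [hu.eventually (hg q hq), hle] with n hqn hn
  exact hqn.le.trans hn

theorem tendsto_zero_of_smul_tendsto_zero {E : Type*} [SeminormedAddCommGroup E] [NormedSpace ℝ E]
    {g : α → ℝ} {w : α → E} {δ : ℝ} (hδ : 0 < δ) (hg : ∀ᶠ n in l, δ ≤ g n)
    (h : Tendsto (fun n => g n • w n) l (𝓝 0)) : Tendsto w l (𝓝 0) := by
  have hbound : Tendsto (fun n => ‖g n • w n‖ / δ) l (𝓝 0) := by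
    simpa using h.norm.div_const δ
  refine squeeze_zero_norm' ?_ hbound
  filter_upwards [hg] with n hn
  rw [le_div_iff₀ hδ, mul_comm, norm_smul, Real.norm_of_nonneg (hδ.le.trans hn)]
  gcongr

theorem exists_pos_eventually_le_one_sub_of_limsup_lt_one {a : α → ℝ} (ha : ∀ n, a n ≤ 1)
    (hlim : limsup a l < 1) : ∃ δ > 0, ∀ᶠ n in l, δ ≤ 1 - a n := by
  obtain ⟨c, hac, hc⟩ := exists_between hlim
  refine ⟨1 - c, sub_pos.2 hc, ?_⟩
  filter_upwards [eventually_lt_of_limsup_lt hac (isBoundedUnder_of ⟨1, ha⟩)] with n hn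
  linarith

end Limits

section Geometry

variable {E : Type*} [SeminormedAddCommGroup E] [InnerProductSpace ℝ E]

theorem norm_smul_add_one_sub_smul_sq (t : ℝ) (u w : E) :
    ‖t • u + (1 - t) • w‖ ^ 2
      = t * ‖u‖ ^ 2 + (1 - t) * ‖w‖ ^ 2 - t * (1 - t) * ‖u - w‖ ^ 2 := by
  simp only [← real_inner_self_eq_norm_sq, inner_add_left, inner_add_right, inner_sub_left,
    inner_sub_right, real_inner_smul_left, real_inner_smul_right, real_inner_comm u w]
  ring

theorem norm_sub_sq_eq_add_add_inner (u v w : E) :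
    ‖u - v‖ ^ 2 = ‖w - v‖ ^ 2 + ‖u - w‖ ^ 2 + 2 * ⟪v - w, w - u⟫ := by
  have hsplit : u - v = (u - w) - (v - w) := by abel
  rw [hsplit, norm_sub_sq_real, norm_sub_rev w v, ← neg_sub w u, inner_neg_left,
    real_inner_comm, norm_neg]
  ring

theorem convex_setOf_norm_sub_le_norm_sub (u w : E) : Convex ℝ {v : E | ‖u - v‖ ≤ ‖w - v‖} := by
  have hhalf : {v : E | ‖u - v‖ ≤ ‖w - v‖}
      = {v | innerₗ E (w - u) v ≤ (‖w‖ ^ 2 - ‖u‖ ^ 2) / 2} := by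
    ext v
    rw [mem_ofPred_eq, mem_ofPred_eq, ← sq_le_sq₀ (norm_nonneg _) (norm_nonneg _),
      norm_sub_sq_real, norm_sub_sq_real, innerₗ_apply_apply, inner_sub_left]
    constructor <;> intro h <;> linarith
  rw [hhalf]
  exact convex_halfSpace_le (innerₗ E (w - u)).isLinear _

end Geometry

section ShrinkingProjection

namespace IsProjOn

variable {H : Type*} [NormedAddCommGroup H]

theorem of_tendsto {α : Type*} {l : Filter α} [l.NeBot] {D : α → Set H} {K : Set H} {x₀ p : H}
    {x : α → H} (hproj : ∀ n, IsProjOn (D n) x₀ (x n)) (hKD : ∀ n, K ⊆ D n) (hp : p ∈ K)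
    (hx : Tendsto x l (𝓝 p)) : IsProjOn K x₀ p :=
  ⟨hp, fun v hv => le_of_tendsto' (hx.sub_const x₀).norm fun n => (hproj n).2 v (hKD n hv)⟩

variable [InnerProductSpace ℝ H]

theorem inner_sub_nonneg {K : Set H} (hK : Convex ℝ K) {x p w : H} (hp : IsProjOn K x p)
    (hw : w ∈ K) : 0 ≤ ⟪w - p, p - x⟫ := by
  have hmin : ‖x - p‖ = ⨅ v : K, ‖x - v‖ := by
    have : Nonempty K := ⟨⟨p, hp.1⟩⟩
    refine le_antisymm (le_ciInf fun v => ?_)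
      (ciInf_le ⟨0, forall_mem_range.2 fun _ => norm_nonneg _⟩ (⟨p, hp.1⟩ : K))
    simpa only [norm_sub_rev x] using hp.2 v v.2
  have hobtuse := (norm_eq_iInf_iff_real_inner_le_zero hK hp.1).1 hmin w hw
  rwa [real_inner_comm, ← neg_sub p x, inner_neg_right, neg_nonpos] at hobtuse

theorem norm_sub_sq_add_le {K : Set H} (hK : Convex ℝ K) {x p w : H} (hp : IsProjOn K x p)
    (hw : w ∈ K) : ‖p - w‖ ^ 2 + ‖p - x‖ ^ 2 ≤ ‖w - x‖ ^ 2 := by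
  have hsplit := norm_sub_sq_eq_add_add_inner x w p
  rw [norm_sub_rev x w, norm_sub_rev x p] at hsplit
  linarith [hp.inner_sub_nonneg hK hw]

theorem cauchySeq {D : ℕ → Set H} (hanti : Antitone D) (hconv : ∀ n, Convex ℝ (D n)) {x₀ v : H}
    {x : ℕ → H} (hproj : ∀ n, IsProjOn (D n) x₀ (x n)) (hv : ∀ n, v ∈ D n) : CauchySeq x := by
  have hsq : ∀ n m, n ≤ m → ‖x n - x m‖ ^ 2 + ‖x n - x₀‖ ^ 2 ≤ ‖x m - x₀‖ ^ 2 := fun n m hnm =>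
    (hproj n).norm_sub_sq_add_le (hconv n) (hanti hnm (hproj m).1)
  have hmono : Monotone fun n => ‖x n - x₀‖ ^ 2 := fun n m hnm =>
    (le_add_of_nonneg_left (sq_nonneg _)).trans (hsq n m hnm)
  have hbdd : BddAbove (range fun n => ‖x n - x₀‖ ^ 2) :=
    ⟨‖v - x₀‖ ^ 2, forall_mem_range.2 fun n => by gcongr; exact (hproj n).2 v (hv n)⟩
  set L := ⨆ n, ‖x n - x₀‖ ^ 2
  have hlim : Tendsto (fun n => √(L - ‖x n - x₀‖ ^ 2)) atTop (𝓝 0) := by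
    simpa [L] using ((tendsto_atTop_ciSup hmono hbdd).const_sub L).sqrt
  refine cauchySeq_of_le_tendsto_0' _ (fun n m hnm => ?_) hlim
  rw [dist_eq_norm]
  exact Real.le_sqrt_of_sq_le (by linarith [hsq n m hnm, le_ciSup hbdd m])

end IsProjOn

end ShrinkingProjection

section EquilibriumProblem

/-- The solution set `EP(f, C)` of the equilibrium problem for the bifunction `f` on `C`. -/
def equilibriumSet {E : Type*} (f : E → E → ℝ) (C : Set E) : Set E :=
  {v ∈ C | ∀ w ∈ C, 0 ≤ f v w}

/-- Monotonicity of a bifunction on `C`, condition (A2). -/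
def MonotoneBifunctionOn {E : Type*} (f : E → E → ℝ) (C : Set E) : Prop :=
  ∀ u ∈ C, ∀ v ∈ C, f u v + f v u ≤ 0

/-- The standing conditions (A1)–(A4) on an equilibrium bifunction. The upper limit is taken in `ℝ`,
so it has the junk value `0` when the eventual upper bounds are absent or unbounded below. -/
structure IsEquilibriumBifunctionOn {E : Type*} [AddCommGroup E] [Module ℝ E] [TopologicalSpace E]
    (f : E → E → ℝ) (C : Set E) : Prop where
  self_eq_zero : ∀ u ∈ C, f u u = 0
  monotone : MonotoneBifunctionOn f C
  limsup_le : ∀ u ∈ C, ∀ v ∈ C, ∀ w ∈ C,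
    limsup (fun t : ℝ => f (t • w + (1 - t) • u) v) (𝓝[>] 0) ≤ f u v
  convexOn : ∀ u ∈ C, ConvexOn ℝ C (f u)
  lowerSemicontinuousOn : ∀ u ∈ C, LowerSemicontinuousOn (f u) C

theorem IsEquilibriumBifunctionOn.mem_equilibriumSet_of_forall_nonpos {E : Type*} [AddCommGroup E]
    [Module ℝ E] [TopologicalSpace E] {f : E → E → ℝ} {C : Set E}
    (hf : IsEquilibriumBifunctionOn f C) (hC : Convex ℝ C) {p : E} (hp : p ∈ C)
    (hminty : ∀ w ∈ C, f w p ≤ 0) : p ∈ equilibriumSet f C := by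
  refine ⟨hp, fun w hw => le_trans ?_ (hf.limsup_le p hp w hw w hw)⟩
  have hnonneg : ∀ t ∈ Ioo (0 : ℝ) 1, 0 ≤ f (t • w + (1 - t) • p) w := by
    intro t ht
    have ht' : 0 ≤ 1 - t := sub_nonneg.2 ht.2.le
    set u := t • w + (1 - t) • p
    have hu : u ∈ C := hC hw hp ht.1.le ht' (add_sub_cancel _ _)
    have hconvex : 0 ≤ t * f u w + (1 - t) * f u p := by
      simpa only [smul_eq_mul, u, hf.self_eq_zero u hu] using
        (hf.convexOn u hu).2 hw hp ht.1.le ht' (add_sub_cancel _ _)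
    refine nonneg_of_mul_nonneg_right (b := f u w) ?_ ht.1
    linarith [mul_nonpos_of_nonneg_of_nonpos ht' (hminty u hu)]
  rw [limsup_eq]
  -- `Real.sInf_nonneg` needs no boundedness, so the junk values of the upper limit are covered.
  refine Real.sInf_nonneg fun A hA => ?_
  have hbelow : ∀ᶠ t : ℝ in 𝓝[>] 0, f (t • w + (1 - t) • p) w ≤ A := hA
  obtain ⟨t, htA, ht⟩ := (hbelow.and (Ioo_mem_nhdsGT one_pos)).exists
  exact (hnonneg t ht).trans htA

variable {E : Type*} [SeminormedAddCommGroup E] [InnerProductSpace ℝ E]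

/-- `y` is a value at `x` of the resolvent of the bifunction `f` on `C` with step size `r`. -/
def IsResolvent (f : E → E → ℝ) (C : Set E) (r : ℝ) (x y : E) : Prop :=
  y ∈ C ∧ ∀ w ∈ C, 0 ≤ f y w + (1 / r) * ⟪w - y, y - x⟫

namespace IsResolvent

variable {f : E → E → ℝ} {C : Set E}

theorem norm_sub_sq_le {r : ℝ} {x y v : E} (hy : IsResolvent f C r x y)
    (hf : MonotoneBifunctionOn f C) (hr : 0 < r) (hv : v ∈ equilibriumSet f C) :
    ‖y - v‖ ^ 2 ≤ ‖x - v‖ ^ 2 - ‖x - y‖ ^ 2 := by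
  have hmul : 0 ≤ (1 / r) * ⟪v - y, y - x⟫ := by
    linarith [hy.2 v hv.1, hv.2 y hy.1, hf v hv.1 y hy.1]
  have hinner : 0 ≤ ⟪v - y, y - x⟫ := nonneg_of_mul_nonneg_right hmul (one_div_pos.2 hr)
  linarith [norm_sub_sq_eq_add_add_inner x v y]

theorem apply_le {r d : ℝ} {x y w : E} (hy : IsResolvent f C r x y)
    (hf : MonotoneBifunctionOn f C) (hd : 0 < d) (hdr : d ≤ r) (hw : w ∈ C) :
    f w y ≤ 1 / d * (‖w - y‖ * ‖y - x‖) := by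
  have hr : 0 < r := hd.trans_le hdr
  calc f w y ≤ 1 / r * ⟪w - y, y - x⟫ := by linarith [hy.2 w hw, hf w hw y hy.1]
    _ ≤ 1 / r * (‖w - y‖ * ‖y - x‖) := by gcongr; exact real_inner_le_norm _ _
    _ ≤ 1 / d * (‖w - y‖ * ‖y - x‖) := by gcongr

theorem limit_mem_equilibriumSet {α : Type*} {l : Filter α} [l.NeBot] {r : α → ℝ} {d : ℝ}
    {x y : α → E} {p : E} (hy : ∀ n, IsResolvent f C (r n) (x n) (y n))
    (hf : IsEquilibriumBifunctionOn f C) (hC : Convex ℝ C) (hd : 0 < d) (hr : ∀ n, d ≤ r n)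
    (hp : p ∈ C) (hx : Tendsto x l (𝓝 p)) (hylim : Tendsto y l (𝓝 p)) : p ∈ equilibriumSet f C := by
  refine hf.mem_equilibriumSet_of_forall_nonpos hC hp fun w hw => ?_
  have hbound : Tendsto (fun n => 1 / d * (‖w - y n‖ * ‖y n - x n‖)) l (𝓝 0) := by
    simpa using ((hylim.const_sub w).norm.mul (hylim.sub hx).norm).const_mul (1 / d)
  exact le_of_lowerSemicontinuousWithinAt_of_tendsto (hf.lowerSemicontinuousOn w hw p hp)
    (tendsto_nhdsWithin_iff.2 ⟨hylim, .of_forall fun n => (hy n).1⟩)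
    (.of_forall fun n => (hy n).apply_le hf.monotone hd (hr n) hw) hbound

end IsResolvent

end EquilibriumProblem

section StrictPseudocontraction

/-- `T` is `κ`-strictly pseudocontractive on `C`. Here `T` may leave `C` and `κ` may be any real
number; in a Hilbert space `κ = -1` gives the firmly nonexpansive maps. -/
def StrictlyPseudocontractiveOn {E : Type*} [SeminormedAddCommGroup E] (κ : ℝ) (T : E → E)
    (C : Set E) : Prop :=
  ∀ u ∈ C, ∀ v ∈ C, ‖T u - T v‖ ^ 2 ≤ ‖u - v‖ ^ 2 + κ * ‖(u - T u) - (v - T v)‖ ^ 2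

namespace StrictlyPseudocontractiveOn

theorem norm_relaxation_sub_le {E : Type*} [SeminormedAddCommGroup E] [InnerProductSpace ℝ E]
    {κ : ℝ} {T : E → E} {C : Set E} (hT : StrictlyPseudocontractiveOn κ T C) {t : ℝ} (hκt : κ ≤ t)
    (ht : t ≤ 1) {u v : E} (hu : u ∈ C) (hv : v ∈ C) (hfix : T v = v) :
    ‖t • u + (1 - t) • T u - v‖ ≤ ‖u - v‖ := by
  have hpseudo := hT u hu v hv
  rw [hfix, sub_self, sub_zero] at hpseudo
  have hcomb := norm_smul_add_one_sub_smul_sq t (u - v) (T u - v)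
  rw [sub_sub_sub_cancel_right] at hcomb
  have hsplit : t • u + (1 - t) • T u - v = t • (u - v) + (1 - t) • (T u - v) := by module
  rw [← sq_le_sq₀ (norm_nonneg _) (norm_nonneg _), hsplit]
  calc ‖t • (u - v) + (1 - t) • (T u - v)‖ ^ 2
      ≤ t * ‖u - v‖ ^ 2 + (1 - t) * (‖u - v‖ ^ 2 + κ * ‖u - T u‖ ^ 2)
          - t * (1 - t) * ‖u - T u‖ ^ 2 := by
        rw [hcomb]
        gcongr
    _ = ‖u - v‖ ^ 2 - (1 - t) * (t - κ) * ‖u - T u‖ ^ 2 := by ring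
    _ ≤ ‖u - v‖ ^ 2 := sub_le_self _ <|
        mul_nonneg (mul_nonneg (sub_nonneg.2 ht) (sub_nonneg.2 hκt)) (sq_nonneg _)

theorem map_eq_self_of_tendsto {E α : Type*} [NormedAddCommGroup E] {l : Filter α} [l.NeBot]
    {κ : ℝ} {T : E → E} {C : Set E} (hT : StrictlyPseudocontractiveOn κ T C) (hκ : κ < 1)
    {u : α → E} {p : E} (huC : ∀ n, u n ∈ C) (hp : p ∈ C) (hu : Tendsto u l (𝓝 p))
    (hres : Tendsto (fun n => u n - T (u n)) l (𝓝 0)) : T p = p := by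
  have hTu : Tendsto (fun n => T (u n)) l (𝓝 p) := by simpa using hu.sub hres
  have hle : ‖p - T p‖ ^ 2 ≤ ‖p - p‖ ^ 2 + κ * ‖0 - (p - T p)‖ ^ 2 :=
    le_of_tendsto_of_tendsto' ((hTu.sub_const _).norm.pow 2)
      (((hu.sub_const p).norm.pow 2).add (((hres.sub_const _).norm.pow 2).const_mul κ))
      fun n => hT (u n) (huC n) p hp
  rw [sub_self, norm_zero, zero_sub, norm_neg] at hle
  have hzero : ‖p - T p‖ ^ 2 = 0 := by nlinarith [sq_nonneg ‖p - T p‖]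
  exact (sub_eq_zero.1 (norm_eq_zero.1 (pow_eq_zero_iff two_ne_zero |>.1 hzero))).symm

end StrictlyPseudocontractiveOn

end StrictPseudocontraction

section ParallelHybrid

variable {H ι τ : Type*}

/-- The set `F` of points of `C` that solve all equilibrium problems `f i` and are fixed by all
maps `S j`. -/
def commonSolutionSet (f : ι → H → H → ℝ) (S : τ → H → H) (C : Set H) : Set H :=
  {v ∈ C | ∀ i, ∀ w ∈ C, 0 ≤ f i v w} ∩ {v | ∀ j, S j v = v}

variable [NormedAddCommGroup H] [InnerProductSpace ℝ H]

/-- The sequences of the parallel hybrid algorithm: resolvents `y n i` of the current point `x n`,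
relaxed images `z n j`, the shrinking sets `D n`, and the candidates `ybar n`, `zbar n` farthest
from `x n`. The index types are arbitrary; that farthest candidates exist is part of the notion. -/
structure IsParallelHybridIteration (f : ι → H → H → ℝ) (S : τ → H → H) (C : Set H)
    (a β r : ℕ → ℝ) (x : ℕ → H) (y : ℕ → ι → H) (z : ℕ → τ → H) (ybar zbar : ℕ → H)
    (D : ℕ → Set H) : Prop where
  init_mem : x 0 ∈ C
  set_zero : D 0 = C
  isResolvent : ∀ n i, IsResolvent (f i) C (r n) (x n) (y n i)
  exists_ybar_eq : ∀ n, ∃ i, ybar n = y n i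
  norm_y_sub_le : ∀ n i, ‖y n i - x n‖ ≤ ‖ybar n - x n‖
  z_eq : ∀ n j, z n j = a n • x n + (1 - a n) • (β n • ybar n + (1 - β n) • S j (ybar n))
  exists_zbar_eq : ∀ n, ∃ j, zbar n = z n j
  norm_z_sub_le : ∀ n j, ‖z n j - x n‖ ≤ ‖zbar n - x n‖
  set_succ : ∀ n, D (n + 1) = {v ∈ D n | ‖zbar n - v‖ ≤ ‖x n - v‖}
  isProjOn_succ : ∀ n, IsProjOn (D (n + 1)) (x 0) (x (n + 1))

namespace IsParallelHybridIteration

variable {C : Set H} {f : ι → H → H → ℝ} {S : τ → H → H} {κ : ℝ} {a β r : ℕ → ℝ} {x : ℕ → H}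
  {y : ℕ → ι → H} {z : ℕ → τ → H} {ybar zbar : ℕ → H} {D : ℕ → Set H}

theorem antitone (h : IsParallelHybridIteration f S C a β r x y z ybar zbar D) : Antitone D :=
  antitone_nat_of_succ_le fun n => by
    rw [h.set_succ]
    exact sep_subset _ _

theorem convex (h : IsParallelHybridIteration f S C a β r x y z ybar zbar D) (hC : Convex ℝ C)
    (n : ℕ) : Convex ℝ (D n) := by
  induction n with
  | zero => rwa [h.set_zero]
  | succ n ih =>
    rw [h.set_succ]
    exact ih.inter (convex_setOf_norm_sub_le_norm_sub _ _)

theorem isProjOn (h : IsParallelHybridIteration f S C a β r x y z ybar zbar D) :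
    ∀ n, IsProjOn (D n) (x 0) (x n)
  | 0 => ⟨h.set_zero ▸ h.init_mem, fun v _ => by simp⟩
  | n + 1 => h.isProjOn_succ n

theorem mem (h : IsParallelHybridIteration f S C a β r x y z ybar zbar D) (n : ℕ) : x n ∈ C :=
  h.set_zero ▸ h.antitone n.zero_le (h.isProjOn n).1

theorem ybar_mem (h : IsParallelHybridIteration f S C a β r x y z ybar zbar D) (n : ℕ) :
    ybar n ∈ C := by
  obtain ⟨i, hi⟩ := h.exists_ybar_eq n
  exact hi ▸ (h.isResolvent n i).1

theorem norm_ybar_sub_sq_le (h : IsParallelHybridIteration f S C a β r x y z ybar zbar D)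
    (hf : ∀ i, MonotoneBifunctionOn (f i) C) {n : ℕ} (hr : 0 < r n) {v : H}
    (hv : v ∈ commonSolutionSet f S C) :
    ‖ybar n - v‖ ^ 2 ≤ ‖x n - v‖ ^ 2 - ‖x n - ybar n‖ ^ 2 := by
  obtain ⟨i, hi⟩ := h.exists_ybar_eq n
  rw [hi]
  exact (h.isResolvent n i).norm_sub_sq_le (hf i) hr ⟨hv.1.1, hv.1.2 i⟩

theorem norm_zbar_sub_sq_le (h : IsParallelHybridIteration f S C a β r x y z ybar zbar D)
    (hf : ∀ i, MonotoneBifunctionOn (f i) C) (hS : ∀ j, StrictlyPseudocontractiveOn κ (S j) C)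
    {n : ℕ} (ha : a n ∈ Icc 0 1) (hβ : β n ∈ Icc κ 1) (hr : 0 < r n) {v : H}
    (hv : v ∈ commonSolutionSet f S C) :
    ‖zbar n - v‖ ^ 2 ≤ ‖x n - v‖ ^ 2 - (1 - a n) * ‖x n - ybar n‖ ^ 2 := by
  obtain ⟨j, hj⟩ := h.exists_zbar_eq n
  have ha' : 0 ≤ 1 - a n := sub_nonneg.2 ha.2
  set q := β n • ybar n + (1 - β n) • S j (ybar n) with hq
  have hrelax : ‖q - v‖ ≤ ‖ybar n - v‖ :=
    (hS j).norm_relaxation_sub_le hβ.1 hβ.2 (h.ybar_mem n) hv.1.1 (hv.2 j)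
  have hsplit : zbar n - v = a n • (x n - v) + (1 - a n) • (q - v) := by
    rw [hj, h.z_eq, ← hq]
    module
  calc ‖zbar n - v‖ ^ 2
      ≤ a n * ‖x n - v‖ ^ 2 + (1 - a n) * ‖q - v‖ ^ 2 := by
        rw [hsplit, norm_smul_add_one_sub_smul_sq]
        exact sub_le_self _ (mul_nonneg (mul_nonneg ha.1 ha') (sq_nonneg _))
    _ ≤ a n * ‖x n - v‖ ^ 2 + (1 - a n) * ‖ybar n - v‖ ^ 2 := by gcongr
    _ ≤ a n * ‖x n - v‖ ^ 2 + (1 - a n) * (‖x n - v‖ ^ 2 - ‖x n - ybar n‖ ^ 2) := by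
        gcongr
        exact h.norm_ybar_sub_sq_le hf hr hv
    _ = ‖x n - v‖ ^ 2 - (1 - a n) * ‖x n - ybar n‖ ^ 2 := by ring

theorem commonSolutionSet_subset (h : IsParallelHybridIteration f S C a β r x y z ybar zbar D)
    (hf : ∀ i, MonotoneBifunctionOn (f i) C) (hS : ∀ j, StrictlyPseudocontractiveOn κ (S j) C)
    (ha : ∀ n, a n ∈ Icc 0 1) (hβ : ∀ n, β n ∈ Icc κ 1) (hr : ∀ n, 0 < r n) (n : ℕ) :
    commonSolutionSet f S C ⊆ D n := by
  induction n with
  | zero => exact fun v hv => h.set_zero ▸ hv.1.1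
  | succ n ih =>
    intro v hv
    rw [h.set_succ]
    refine ⟨ih hv, (sq_le_sq₀ (norm_nonneg _) (norm_nonneg _)).1 ?_⟩
    exact (h.norm_zbar_sub_sq_le hf hS (ha n) (hβ n) (hr n) hv).trans <|
      sub_le_self _ (mul_nonneg (sub_nonneg.2 (ha n).2) (sq_nonneg _))

theorem tendsto_zbar (h : IsParallelHybridIteration f S C a β r x y z ybar zbar D) {p : H}
    (hx : Tendsto x atTop (𝓝 p)) : Tendsto zbar atTop (𝓝 p) := by
  have hx_succ : Tendsto (fun n => x (n + 1)) atTop (𝓝 p) := hx.comp (tendsto_add_atTop_nat 1)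
  have hle : ∀ n, ‖zbar n - x (n + 1)‖ ≤ ‖x n - x (n + 1)‖ := fun n =>
    (h.set_succ n ▸ (h.isProjOn_succ n).1 : x (n + 1) ∈ {v ∈ D n | ‖zbar n - v‖ ≤ ‖x n - v‖}).2
  have hdiff : Tendsto (fun n => zbar n - x (n + 1)) atTop (𝓝 0) :=
    squeeze_zero_norm hle (by simpa using (hx.sub hx_succ).norm)
  simpa using hdiff.add hx_succ

theorem tendsto_ybar (h : IsParallelHybridIteration f S C a β r x y z ybar zbar D)
    (hf : ∀ i, MonotoneBifunctionOn (f i) C) (hS : ∀ j, StrictlyPseudocontractiveOn κ (S j) C)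
    (hne : (commonSolutionSet f S C).Nonempty) (ha : ∀ n, a n ∈ Icc 0 1)
    (halim : limsup a atTop < 1) (hβ : ∀ n, β n ∈ Icc κ 1) (hr : ∀ n, 0 < r n) {p : H}
    (hx : Tendsto x atTop (𝓝 p)) : Tendsto ybar atTop (𝓝 p) := by
  obtain ⟨v, hv⟩ := hne
  obtain ⟨δ, hδ, haδ⟩ := exists_pos_eventually_le_one_sub_of_limsup_lt_one (fun n => (ha n).2) halim
  have hgap : Tendsto (fun n => ‖x n - v‖ ^ 2 - ‖zbar n - v‖ ^ 2) atTop (𝓝 0) := by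
    simpa using ((hx.sub_const v).norm.pow 2).sub (((h.tendsto_zbar hx).sub_const v).norm.pow 2)
  have hweighted : Tendsto (fun n => (1 - a n) • ‖x n - ybar n‖ ^ 2) atTop (𝓝 0) :=
    squeeze_zero (fun n => mul_nonneg (sub_nonneg.2 (ha n).2) (sq_nonneg _))
      (fun n => le_sub_comm.1 (h.norm_zbar_sub_sq_le hf hS (ha n) (hβ n) (hr n) hv)) hgap
  have hnorm : Tendsto (fun n => ‖x n - ybar n‖) atTop (𝓝 0) := by
    simpa [Real.sqrt_sq] using (tendsto_zero_of_smul_tendsto_zero hδ haδ hweighted).sqrt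
  simpa using hx.sub (tendsto_zero_iff_norm_tendsto_zero.2 hnorm)

theorem tendsto_y (h : IsParallelHybridIteration f S C a β r x y z ybar zbar D) {p : H}
    (hx : Tendsto x atTop (𝓝 p)) (hybar : Tendsto ybar atTop (𝓝 p)) (i : ι) :
    Tendsto (fun n => y n i) atTop (𝓝 p) := by
  have hdiff : Tendsto (fun n => y n i - x n) atTop (𝓝 0) :=
    squeeze_zero_norm (fun n => h.norm_y_sub_le n i) (by simpa using (hybar.sub hx).norm)
  simpa using hdiff.add hx

theorem tendsto_ybar_sub_map (h : IsParallelHybridIteration f S C a β r x y z ybar zbar D)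
    (ha : ∀ n, a n ≤ 1) (halim : limsup a atTop < 1) {b : ℝ} (hb : b < 1) (hβ : ∀ n, β n ≤ b)
    {p : H} (hx : Tendsto x atTop (𝓝 p)) (hybar : Tendsto ybar atTop (𝓝 p)) (j : τ) :
    Tendsto (fun n => ybar n - S j (ybar n)) atTop (𝓝 0) := by
  obtain ⟨δ, hδ, haδ⟩ := exists_pos_eventually_le_one_sub_of_limsup_lt_one ha halim
  set q : ℕ → H := fun n => β n • ybar n + (1 - β n) • S j (ybar n) with hq
  have hz : Tendsto (fun n => z n j - x n) atTop (𝓝 0) :=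
    squeeze_zero_norm (fun n => h.norm_z_sub_le n j)
      (by simpa using ((h.tendsto_zbar hx).sub hx).norm)
  have hqx : Tendsto (fun n => q n - x n) atTop (𝓝 0) := by
    refine tendsto_zero_of_smul_tendsto_zero hδ haδ (hz.congr fun n => ?_)
    rw [h.z_eq]
    module
  refine tendsto_zero_of_smul_tendsto_zero (g := fun n => 1 - β n) (sub_pos.2 hb)
    (.of_forall fun n => sub_le_sub_left (hβ n) 1) ?_
  have hyq : Tendsto (fun n => (ybar n - x n) - (q n - x n)) atTop (𝓝 0) := by
    simpa using (hybar.sub hx).sub hqx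
  refine hyq.congr fun n => ?_
  simp only [hq]
  module

end IsParallelHybridIteration

theorem corollary35_strong_convergence_general {C : Set H} (hC : IsComplete C)
    (hCconv : Convex ℝ C) {f : ι → H → H → ℝ} (hf : ∀ i, IsEquilibriumBifunctionOn (f i) C)
    {S : τ → H → H} {κ : ℝ} (hS : ∀ j, StrictlyPseudocontractiveOn κ (S j) C)
    (hne : (commonSolutionSet f S C).Nonempty) {a : ℕ → ℝ} (ha : ∀ n, a n ∈ Icc 0 1)
    (halim : limsup a atTop < 1) {β : ℕ → ℝ} {b : ℝ} (hb : b < 1) (hβ : ∀ n, β n ∈ Icc κ b)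
    {r : ℕ → ℝ} {d : ℝ} (hd : 0 < d) (hr : ∀ n, d ≤ r n) {x : ℕ → H} {y : ℕ → ι → H}
    {z : ℕ → τ → H} {ybar zbar : ℕ → H} {D : ℕ → Set H}
    (h : IsParallelHybridIteration f S C a β r x y z ybar zbar D) :
    ∃ p, IsProjOn (commonSolutionSet f S C) (x 0) p ∧ Tendsto x atTop (𝓝 p) := by
  have hmono : ∀ i, MonotoneBifunctionOn (f i) C := fun i => (hf i).monotone
  have hβ' : ∀ n, β n ∈ Icc κ 1 := fun n => ⟨(hβ n).1, (hβ n).2.trans hb.le⟩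
  have hr' : ∀ n, 0 < r n := fun n => hd.trans_le (hr n)
  have hsub : ∀ n, commonSolutionSet f S C ⊆ D n :=
    h.commonSolutionSet_subset hmono hS ha hβ' hr'
  have hcauchy : CauchySeq x :=
    IsProjOn.cauchySeq h.antitone (h.convex hCconv) h.isProjOn fun n => hsub n hne.some_mem
  obtain ⟨p, hpC, hx⟩ := cauchySeq_tendsto_of_isComplete hC h.mem hcauchy
  have hybar : Tendsto ybar atTop (𝓝 p) := h.tendsto_ybar hmono hS hne ha halim hβ' hr' hx
  have hequil : ∀ i, p ∈ equilibriumSet (f i) C := fun i =>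
    IsResolvent.limit_mem_equilibriumSet (fun n => h.isResolvent n i) (hf i) hCconv hd hr hpC hx
      (h.tendsto_y hx hybar i)
  have hfix : ∀ j, S j p = p := fun j =>
    (hS j).map_eq_self_of_tendsto (((hβ 0).1.trans (hβ 0).2).trans_lt hb) h.ybar_mem hpC hybar
      (h.tendsto_ybar_sub_map (fun n => (ha n).2) halim hb (fun n => (hβ n).2) hx hybar j)
  exact ⟨p, .of_tendsto h.isProjOn hsub ⟨⟨hpC, fun i => (hequil i).2⟩, hfix⟩ hx, hx⟩

end ParallelHybrid

/-- **Corollary 3.5.** Parallel hybrid algorithm for a finite family of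
equilibrium problems and κ-strictly pseudocontractive mappings: `{xₙ}` converges
strongly to `P_F x₀`. -/
theorem corollary35_strong_convergence
    {H : Type*} [NormedAddCommGroup H] [InnerProductSpace ℝ H] [CompleteSpace H]
    (C : Set H) (hCne : C.Nonempty) (hCcl : IsClosed C) (hCcv : Convex ℝ C)
    (N M : ℕ) (hN : 0 < N) (hM : 0 < M)
    -- the bifunctions fᵢ satisfy (A1)-(A4)
    (f : Fin N → H → H → ℝ)
    (hfA1 : ∀ i, ∀ x ∈ C, f i x x = 0)
    (hfA2 : ∀ i, ∀ x ∈ C, ∀ y ∈ C, f i x y + f i y x ≤ 0)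
    (hfA3 : ∀ i, ∀ x ∈ C, ∀ y ∈ C, ∀ z ∈ C,
      Filter.limsup (fun t : ℝ => f i (t • z + (1 - t) • x) y) (nhdsWithin 0 (Set.Ioi 0))
        ≤ f i x y)
    (hfA4conv : ∀ i, ∀ x ∈ C, ConvexOn ℝ C (f i x))
    (hfA4lsc : ∀ i, ∀ x ∈ C, LowerSemicontinuousOn (f i x) C)
    -- the mappings Sⱼ : C → C are κ-strictly pseudocontractive
    (S : Fin M → H → H) (hS : ∀ j, Set.MapsTo (S j) C C)
    (κ : ℝ) (hκ0 : 0 ≤ κ) (hκ1 : κ < 1)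
    (hpseudo : ∀ j, ∀ x ∈ C, ∀ y ∈ C,
      ‖S j x - S j y‖ ^ 2 ≤ ‖x - y‖ ^ 2 + κ * ‖(x - S j x) - (y - S j y)‖ ^ 2)
    -- the solution set F is nonempty
    (F : Set H)
    (hF : F = {v ∈ C | ∀ i, ∀ y ∈ C, 0 ≤ f i v y} ∩ {v | ∀ j, S j v = v})
    (hFne : F.Nonempty)
    -- control parameters
    (a : ℕ → ℝ) (ha0 : ∀ n, 0 < a n) (ha1 : ∀ n, a n < 1)
    (halimsup : Filter.limsup a Filter.atTop < 1)
    (β : ℕ → ℝ) (b : ℝ) (hbκ : κ < b) (hb1 : b < 1) (hβ : ∀ n, κ ≤ β n ∧ β n ≤ b)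
    (r : ℕ → ℝ) (d e : ℝ) (hd : 0 < d) (hr : ∀ n, d ≤ r n ∧ r n ≤ e)
    -- the iterates of Algorithm 1
    (x : ℕ → H) (y : ℕ → Fin N → H) (z : ℕ → Fin M → H)
    (iN : ℕ → Fin N) (jM : ℕ → Fin M) (ybar zbar : ℕ → H) (Cset : ℕ → Set H)
    (hx0 : x 0 ∈ C) (hC0 : Cset 0 = C)
    -- (i) yₙⁱ = T_{rₙ}^{fᵢ} xₙ
    (hy : ∀ n i, y n i ∈ C ∧ ∀ w ∈ C,
      0 ≤ f i (y n i) w + (1 / r n) * ⟪w - y n i, y n i - x n⟫)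
    -- (ii) iₙ maximizes ‖yₙⁱ - xₙ‖ and ȳₙ = yₙ^{iₙ}
    (hiN : ∀ n i, ‖y n i - x n‖ ≤ ‖y n (iN n) - x n‖)
    (hybar : ∀ n, ybar n = y n (iN n))
    -- (iii) zₙʲ = αₙ xₙ + (1-αₙ)(βₙ ȳₙ + (1-βₙ) Sⱼ ȳₙ)
    (hz : ∀ n j, z n j = a n • x n +
      (1 - a n) • (β n • ybar n + (1 - β n) • S j (ybar n)))
    -- (iv) jₙ maximizes ‖zₙʲ - xₙ‖ and z̄ₙ = zₙ^{jₙ}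
    (hjM : ∀ n j, ‖z n j - x n‖ ≤ ‖z n (jM n) - x n‖)
    (hzbar : ∀ n, zbar n = z n (jM n))
    -- (v) Cₙ₊₁ = {v ∈ Cₙ : ‖z̄ₙ - v‖ ≤ ‖xₙ - v‖}
    (hCset : ∀ n, Cset (n + 1) = {v ∈ Cset n | ‖zbar n - v‖ ≤ ‖x n - v‖})
    -- (vi) xₙ₊₁ = P_{Cₙ₊₁} x₀
    (hxproj : ∀ n, IsProjOn (Cset (n + 1)) (x 0) (x (n + 1))) :
    ∃ p, IsProjOn F (x 0) p ∧ Filter.Tendsto x Filter.atTop (nhds p) := by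
  subst hF
  have hiter : IsParallelHybridIteration f S C a β r x y z ybar zbar Cset :=
    ⟨hx0, hC0, hy, fun n => ⟨iN n, hybar n⟩, fun n i => hybar n ▸ hiN n i, hz,
      fun n => ⟨jM n, hzbar n⟩, fun n j => hzbar n ▸ hjM n j, hCset, hxproj⟩
  exact corollary35_strong_convergence_general hCcl.isComplete hCcv
    (fun i => ⟨hfA1 i, hfA2 i, hfA3 i, hfA4conv i, hfA4lsc i⟩) hpseudo hFne
    (fun n => ⟨(ha0 n).le, (ha1 n).le⟩) halimsup hb1 hβ hd (fun n => (hr n).1) hiter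
end
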